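/- arXiv:0808.3262 — 10 statements merged into one kernel-verified Lean document; each statement's English description precedes it below -/
import Mathlib

section
/- Let L be a Lie algebra over a field F, let I be an ideal of L, and let D be a derivation of L. Then for every natural number n, the F-subspace I + D(I) + D²(I) + ⋯ + Dⁿ(I) (the span of I together with the images of I under the first n powers of D) is an ideal of L. -/
theorem iSup_lt_add_two_eq_sup_shift {α : Type*} [CompleteLattice α] (u : ℕ → α) (n : ℕ) :
    ⨆ j < n + 2, u j = (⨆ j < n + 1, u j) ⊔ ⨆ j < n + 1, u (j + 1) := by
  have shift_le : ⨆ j < n, u (j + 1) ≤ ⨆ j < n + 1, u (j + 1) :=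
    biSup_mono fun _ hj ↦ hj.trans n.lt_succ_self
  rw [Nat.iSup_lt_succ' u (n + 1), Nat.iSup_lt_succ' u n, sup_assoc, sup_eq_right.mpr shift_le]

theorem iSup_map_pow_range_add_two {R M : Type*} [Semiring R] [AddCommMonoid M] [Module R M]
    (f : Module.End R M) (N : Submodule R M) (n : ℕ) :
    ⨆ j ∈ Finset.range (n + 2), N.map (f ^ j) =
      (⨆ j ∈ Finset.range (n + 1), N.map (f ^ j)) ⊔
        (⨆ j ∈ Finset.range (n + 1), N.map (f ^ j)).map f := by
  have map_map_pow (j : ℕ) : (N.map (f ^ j)).map f = N.map (f ^ (j + 1)) := by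
    rw [pow_succ', Module.End.mul_eq_comp, Submodule.map_comp]
  simp only [Submodule.map_iSup, map_map_pow, Finset.mem_range]
  exact iSup_lt_add_two_eq_sup_shift (fun j ↦ N.map (f ^ j)) n

section LieSubmodule

variable {R L M : Type*} [CommRing R] [LieRing L] [AddCommGroup M] [Module R M] [LieRingModule L M]
  {δ : L → L} {T : Module.End R M}

theorem lie_mem_sup_map (hT : ∀ x m, T ⁅x, m⁆ = ⁅x, T m⁆ + ⁅δ x, m⁆) (N : LieSubmodule R L M)
    (x : L) {m : M} (hm : m ∈ N.toSubmodule ⊔ N.toSubmodule.map T) :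
    ⁅x, m⁆ ∈ N.toSubmodule ⊔ N.toSubmodule.map T := by
  obtain ⟨a, ha, _, ⟨b, hb, rfl⟩, rfl⟩ := Submodule.mem_sup.mp hm
  have lie_eq : ⁅x, a + T b⁆ = (⁅x, a⁆ - ⁅δ x, b⁆) + T ⁅x, b⁆ := by
    rw [lie_add, hT]
    abel
  rw [lie_eq]
  exact Submodule.add_mem_sup (sub_mem (N.lie_mem ha) (N.lie_mem hb))
    (Submodule.mem_map_of_mem (N.lie_mem hb))

theorem statement0_general (hT : ∀ x m, T ⁅x, m⁆ = ⁅x, T m⁆ + ⁅δ x, m⁆)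
    (N : LieSubmodule R L M) (n : ℕ) :
    ∃ P : LieSubmodule R L M,
      P.toSubmodule = ⨆ j ∈ Finset.range (n + 1), N.toSubmodule.map (T ^ j) := by
  induction n with
  | zero => exact ⟨N, by simp [Module.End.one_eq_id]⟩
  | succ n ih =>
    obtain ⟨P, hP⟩ := ih
    rw [iSup_map_pow_range_add_two, ← hP]
    exact ⟨{ P.toSubmodule ⊔ P.toSubmodule.map T with lie_mem := lie_mem_sup_map hT P _ }, rfl⟩

end LieSubmodule

/-- Let `L` be a Lie algebra over a field `F`, let `I` be an ideal of `L`,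
and let `D` be a derivation of `L`. Then for every natural number `n`, the `F`-subspace
`I + D(I) + D²(I) + ⋯ + Dⁿ(I)` is an ideal of `L`. -/
theorem statement0 (F L : Type*) [Field F] [LieRing L] [LieAlgebra F L]
    (I : LieIdeal F L) (D : LieDerivation F L L) (n : ℕ) :
    ∃ J : LieIdeal F L,
      J.toSubmodule =
        ⨆ j ∈ Finset.range (n + 1),
          Submodule.map (D.toLinearMap ^ j) I.toSubmodule :=
  statement0_general D.apply_lie_eq_add I n
end

section
/- Let L be a Lie algebra over an arbitrary field F, let I be an ideal of L, and let D be a derivation of L. Then for every natural number s and every natural number m with m ≤ 2ˢ − 1, one has Dᵐ(I⁽ˢ⁾) ⊆ I, where I⁽ˢ⁾ denotes the s-th term of the derived series of I. -/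
/-!
If `Dⁱ` maps `J` into `I` for `i < p`, and `Dʲ` maps `K` into `I` for `j < q`, then `Dⁿ` maps
`⁅J, K⁆` into `I` for `n < p + q`: in each term `⁅Dⁱ a, Dʲ b⁆` of the Leibniz expansion, either
`i < p` or `j < q`, and `I` absorbs brackets. Hence the range of admissible exponents doubles at
each step of the derived series, starting from `m < 1` at `I⁽⁰⁾ = I`.
-/

section

variable {R L : Type*} [CommRing R] [LieRing L] [LieAlgebra R L] {I : LieIdeal R L}
  {D : LieDerivation R L L} {p q n : ℕ}

theorem iterate_derivation_lie_mem {a b : L} (ha : ∀ i < p, D^[i] a ∈ I)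
    (hb : ∀ j < q, D^[j] b ∈ I) (hn : n < p + q) : D^[n] ⁅a, b⁆ ∈ I := by
  rw [LieDerivation.iterate_apply_lie]
  refine sum_mem fun ⟨i, j⟩ hij ↦ nsmul_mem ?_ _
  have hsum : i + j = n := Finset.HasAntidiagonal.mem_antidiagonal.mp hij
  obtain hi | hj : i < p ∨ j < q := by omega
  · exact lie_mem_left R L I _ _ (ha i hi)
  · exact lie_mem_right R L I _ _ (hb j hj)

theorem map_derivation_pow_le_iff {J : LieIdeal R L} :
    J.toSubmodule.map (D.toLinearMap ^ n) ≤ I.toSubmodule ↔ ∀ x ∈ J, D^[n] x ∈ I := by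
  rw [Submodule.map_le_iff_le_comap]
  simp only [SetLike.le_def, Submodule.mem_comap, LieSubmodule.mem_toSubmodule,
    Module.End.pow_apply, LieDerivation.coeFn_coe]

theorem map_derivation_pow_lie_le {J K : LieIdeal R L}
    (hJ : ∀ i < p, J.toSubmodule.map (D.toLinearMap ^ i) ≤ I.toSubmodule)
    (hK : ∀ j < q, K.toSubmodule.map (D.toLinearMap ^ j) ≤ I.toSubmodule) (hn : n < p + q) :
    ⁅J, K⁆.toSubmodule.map (D.toLinearMap ^ n) ≤ I.toSubmodule := by
  simp only [map_derivation_pow_le_iff] at hJ hK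
  rw [LieSubmodule.lieIdeal_oper_eq_linear_span', Submodule.map_span_le]
  rintro _ ⟨a, ha, b, hb, rfl⟩
  rw [Module.End.pow_apply]
  exact iterate_derivation_lie_mem (fun i hi ↦ hJ i hi a ha) (fun j hj ↦ hK j hj b hb) hn

end

theorem statement1_general {R L : Type*} [CommRing R] [LieRing L] [LieAlgebra R L]
    (I : LieIdeal R L) (D : LieDerivation R L L) {s m : ℕ} (hm : m < 2 ^ s) :
    Submodule.map (D.toLinearMap ^ m)
        (LieAlgebra.derivedSeriesOfIdeal R L s I).toSubmodule ≤ I.toSubmodule := by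
  induction s generalizing m with
  | zero =>
    obtain rfl : m = 0 := by simpa using hm
    rw [pow_zero, Module.End.one_eq_id, Submodule.map_id, LieAlgebra.derivedSeriesOfIdeal_zero]
  | succ s ih =>
    rw [LieAlgebra.derivedSeriesOfIdeal_succ]
    rw [pow_succ, mul_two] at hm
    exact map_derivation_pow_lie_le (fun _ ↦ ih) (fun _ ↦ ih) hm

/-- Let `L` be a Lie algebra over an arbitrary field `F`, let `I` be an
ideal of `L`, and let `D` be a derivation of `L`. Then for every natural number `s` and
every `m ≤ 2ˢ - 1`, one has `Dᵐ(I⁽ˢ⁾) ⊆ I`, where `I⁽ˢ⁾` is the `s`-th term of the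
derived series of `I`. -/
theorem statement1 (F L : Type*) [Field F] [LieRing L] [LieAlgebra F L]
    (I : LieIdeal F L) (D : LieDerivation F L L) (s m : ℕ) (hm : m ≤ 2 ^ s - 1) :
    Submodule.map (D.toLinearMap ^ m)
        (LieAlgebra.derivedSeriesOfIdeal F L s I).toSubmodule ≤ I.toSubmodule :=
  statement1_general I D ((Nat.le_sub_one_iff_lt (Nat.two_pow_pos s)).mp hm)
end

section
/- Let L be a Lie algebra over a field F, let I be an ideal of L, let D be a derivation of L, and let k ≥ 1. If the characteristic of F does not divide the binomial coefficient C(2ᵏ, 2ᵏ⁻¹), then [D^{2^{k-1}}(I⁽ᵏ⁻¹⁾), D^{2^{k-1}}(I⁽ᵏ⁻¹⁾)] ⊆ D^{2^k}(I⁽ᵏ⁾) + I, where the left-hand side is the span of all brackets of elements of D^{2^{k-1}}(I⁽ᵏ⁻¹⁾). -/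
/-!
Call `a` of order at least `n` if `a, D a, …, D^{n-1} a` all lie in `I`. By the Leibniz rule,
brackets add orders, so the elements of `I⁽ᵐ⁾` have order at least `2ᵐ`. If `a` and `b` have orders
at least `m` and `n`, then modulo `I` the only surviving term of the Leibniz expansion of
`D^{m+n} ⁅a, b⁆` is `C(m+n, m) ⁅Dᵐ a, Dⁿ b⁆`, and the binomial coefficient can be divided out.
-/

section

open Finset.HasAntidiagonal LieAlgebra

variable {R L : Type*} [CommRing R] [LieRing L] [LieAlgebra R L]

theorem derivation_pow_apply_lie (D : LieDerivation R L L) (N : ℕ) (a b : L) :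
    (D.toLinearMap ^ N) ⁅a, b⁆ = ∑ ij ∈ antidiagonal N,
      N.choose ij.1 • ⁅(D.toLinearMap ^ ij.1) a, (D.toLinearMap ^ ij.2) b⁆ := by
  simpa only [Module.End.pow_apply, LieDerivation.coeFn_coe] using D.iterate_apply_lie N a b

/-- The elements whose first `n` iterates `a, D a, …, D^{n-1} a` under the derivation `D` lie in the
ideal `I`. As `n` grows these ideals decrease from `⊤` (at `n = 0`) through `I` (at `n = 1`) towards
the largest `D`-stable ideal contained in `I`. -/
def iterateCore (D : LieDerivation R L L) (I : LieIdeal R L) (n : ℕ) : LieIdeal R L where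
  carrier := {a | ∀ i < n, (D.toLinearMap ^ i) a ∈ I}
  zero_mem' i _ := by simp only [map_zero, zero_mem]
  add_mem' ha hb i hi := by simpa only [map_add] using add_mem (ha i hi) (hb i hi)
  smul_mem' r a ha i hi := by simpa only [map_smul] using SMulMemClass.smul_mem r (ha i hi)
  lie_mem {x a} ha i hi := by
    rw [derivation_pow_apply_lie]
    refine sum_mem fun ij hij ↦ nsmul_mem (lie_mem_right R L I _ _ (ha _ ?_)) _
    exact (antidiagonal.snd_le hij).trans_lt hi

variable {D : LieDerivation R L L} {I : LieIdeal R L} {m n : ℕ}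

theorem mem_iterateCore {a : L} : a ∈ iterateCore D I n ↔ ∀ i < n, (D.toLinearMap ^ i) a ∈ I :=
  Iff.rfl

theorem iterateCore_one : iterateCore D I 1 = I := by
  ext a
  simp only [mem_iterateCore, Nat.lt_one_iff, forall_eq, pow_zero, Module.End.one_apply]

namespace iterateCore

theorem lie_pow_apply_mem {a b : L} (ha : a ∈ iterateCore D I m) (hb : b ∈ iterateCore D I n)
    {i j : ℕ} (hij : i < m ∨ j < n) :
    ⁅(D.toLinearMap ^ i) a, (D.toLinearMap ^ j) b⁆ ∈ I :=
  hij.elim (fun hi ↦ lie_mem_left R L I _ _ (ha i hi)) (fun hj ↦ lie_mem_right R L I _ _ (hb j hj))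

theorem lie_le_add (D : LieDerivation R L L) (I : LieIdeal R L) (m n : ℕ) :
    ⁅iterateCore D I m, iterateCore D I n⁆ ≤ iterateCore D I (m + n) := by
  refine LieSubmodule.lie_le_iff _ _ _ |>.mpr fun a ha b hb N hN ↦ ?_
  rw [derivation_pow_apply_lie]
  refine sum_mem fun ij hij ↦ nsmul_mem (lie_pow_apply_mem ha hb ?_) _
  have hsum := mem_antidiagonal.mp hij
  omega

theorem pow_add_apply_lie_sub_choose_nsmul_mem {a b : L}
    (ha : a ∈ iterateCore D I m) (hb : b ∈ iterateCore D I n) :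
    (D.toLinearMap ^ (m + n)) ⁅a, b⁆ -
      (m + n).choose m • ⁅(D.toLinearMap ^ m) a, (D.toLinearMap ^ n) b⁆ ∈ I := by
  have hmn : (m, n) ∈ antidiagonal (m + n) := mem_antidiagonal.mpr rfl
  rw [derivation_pow_apply_lie, ← Finset.add_sum_erase _ _ hmn, add_sub_cancel_left]
  refine sum_mem fun ij hij ↦ nsmul_mem (lie_pow_apply_mem ha hb ?_) _
  obtain ⟨hne, hsum⟩ := Finset.mem_erase.mp hij
  rw [mem_antidiagonal] at hsum
  rw [Ne, Prod.ext_iff] at hne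
  omega

theorem lie_pow_apply_mem_map_sup {J K : LieIdeal R L}
    (hJ : J ≤ iterateCore D I m) (hK : K ≤ iterateCore D I n)
    (hchoose : IsUnit ((m + n).choose m : R)) {a b : L} (ha : a ∈ J) (hb : b ∈ K) :
    ⁅(D.toLinearMap ^ m) a, (D.toLinearMap ^ n) b⁆ ∈
      Submodule.map (D.toLinearMap ^ (m + n)) ⁅J, K⁆.toSubmodule ⊔ I.toSubmodule := by
  have hD : (D.toLinearMap ^ (m + n)) ⁅a, b⁆ ∈
      Submodule.map (D.toLinearMap ^ (m + n)) ⁅J, K⁆.toSubmodule :=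
    Submodule.mem_map_of_mem (LieSubmodule.lie_mem_lie ha hb)
  have hI := pow_add_apply_lie_sub_choose_nsmul_mem (hJ ha) (hK hb)
  rw [← Submodule.smul_mem_iff_of_isUnit _ hchoose, Nat.cast_smul_eq_nsmul,
    ← sub_sub_self ((D.toLinearMap ^ (m + n)) ⁅a, b⁆) (_ • _)]
  exact sub_mem (Submodule.mem_sup_left hD) (Submodule.mem_sup_right hI)

end iterateCore

theorem derivedSeriesOfIdeal_le_iterateCore (D : LieDerivation R L L) (I : LieIdeal R L) (m : ℕ) :
    derivedSeriesOfIdeal R L m I ≤ iterateCore D I (2 ^ m) := by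
  induction m with
  | zero => rw [derivedSeriesOfIdeal_zero, pow_zero, iterateCore_one]
  | succ m ih =>
    rw [derivedSeriesOfIdeal_succ, pow_succ, mul_two]
    exact (LieSubmodule.mono_lie ih ih).trans (iterateCore.lie_le_add D I _ _)

theorem statement2_general (I : LieIdeal R L) (D : LieDerivation R L L) (m : ℕ)
    (hchoose : IsUnit ((2 ^ (m + 1)).choose (2 ^ m) : R)) :
    Submodule.span R
        {z : L | ∃ x ∈ Submodule.map (D.toLinearMap ^ 2 ^ m)
            (derivedSeriesOfIdeal R L m I).toSubmodule,
          ∃ y ∈ Submodule.map (D.toLinearMap ^ 2 ^ m)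
            (derivedSeriesOfIdeal R L m I).toSubmodule,
          z = ⁅x, y⁆} ≤
      Submodule.map (D.toLinearMap ^ 2 ^ (m + 1))
          (derivedSeriesOfIdeal R L (m + 1) I).toSubmodule ⊔
        I.toSubmodule := by
  have hcore := derivedSeriesOfIdeal_le_iterateCore D I m
  rw [pow_succ, mul_two] at hchoose ⊢
  rw [Submodule.span_le, derivedSeriesOfIdeal_succ]
  rintro _ ⟨_, ⟨a, ha, rfl⟩, _, ⟨b, hb, rfl⟩, rfl⟩
  exact iterateCore.lie_pow_apply_mem_map_sup hcore hcore hchoose ha hb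

end

/-- Let `L` be a Lie algebra over a field `F`, `I` an ideal of `L`,
`D` a derivation of `L`, and `k ≥ 1`. If `char F` does not divide the binomial
coefficient `C(2ᵏ, 2ᵏ⁻¹)` (equivalently, `C(2ᵏ, 2ᵏ⁻¹) ≠ 0` in `F`), then
`[D^{2^{k-1}}(I⁽ᵏ⁻¹⁾), D^{2^{k-1}}(I⁽ᵏ⁻¹⁾)] ⊆ D^{2^k}(I⁽ᵏ⁾) + I`, where the left-hand
side is the span of all brackets of elements of `D^{2^{k-1}}(I⁽ᵏ⁻¹⁾)`. -/
theorem statement2 (F L : Type*) [Field F] [LieRing L] [LieAlgebra F L]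
    (I : LieIdeal F L) (D : LieDerivation F L L) (k : ℕ) (hk : 1 ≤ k)
    (hchar : (Nat.choose (2 ^ k) (2 ^ (k - 1)) : F) ≠ 0) :
    Submodule.span F
        {z : L | ∃ x ∈ Submodule.map (D.toLinearMap ^ 2 ^ (k - 1))
            (LieAlgebra.derivedSeriesOfIdeal F L (k - 1) I).toSubmodule,
          ∃ y ∈ Submodule.map (D.toLinearMap ^ 2 ^ (k - 1))
            (LieAlgebra.derivedSeriesOfIdeal F L (k - 1) I).toSubmodule,
          z = ⁅x, y⁆} ≤
      Submodule.map (D.toLinearMap ^ 2 ^ k)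
          (LieAlgebra.derivedSeriesOfIdeal F L k I).toSubmodule ⊔
        I.toSubmodule := by
  obtain ⟨m, rfl⟩ := Nat.exists_eq_add_of_le' hk
  exact statement2_general I D m hchar.isUnit
end

section
/- Let p be an odd prime and n a positive natural number. Then p does not divide any of the binomial coefficients C(2,1), C(4,2), …, C(2ⁿ, 2ⁿ⁻¹) if and only if n < log₂ p (equivalently, if and only if 2ⁿ < p). -/
/-!
All prime factors of `C(2ᵏ, 2ᵏ⁻¹)` are at most `2ᵏ`, so primes above `2ⁿ` divide none of the
coefficients. Conversely, the first power of two `2ᵏ ≥ p` satisfies `2ᵏ⁻¹ < p`, so `p` divides the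
numerator of `(2ᵏ)! / (2ᵏ⁻¹)!²` but not its denominator.
-/

theorem prime_dvd_choose_two_pow_clog {p : ℕ} (hp : p.Prime) :
    p ∣ (2 ^ Nat.clog 2 p).choose (2 ^ (Nat.clog 2 p - 1)) := by
  have half_lt : 2 ^ (Nat.clog 2 p - 1) < p := Nat.pow_pred_clog_lt_self one_lt_two hp.one_lt
  have le_pow : p ≤ 2 ^ Nat.clog 2 p := Nat.le_pow_clog one_lt_two p
  have clog_ne_zero : Nat.clog 2 p ≠ 0 := (Nat.clog_pos one_lt_two hp.two_le).ne'
  have sub_half : 2 ^ Nat.clog 2 p - 2 ^ (Nat.clog 2 p - 1) = 2 ^ (Nat.clog 2 p - 1) := by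
    rw [← mul_pow_sub_one clog_ne_zero 2, two_mul, Nat.add_sub_cancel]
  exact hp.dvd_choose half_lt (sub_half.trans_lt half_lt) le_pow

/-- Let `p` be an odd prime and `n` a positive natural number. Then `p`
does not divide any of the binomial coefficients `C(2,1), C(4,2), …, C(2ⁿ, 2ⁿ⁻¹)` if and
only if `n < log₂ p`, equivalently `2ⁿ < p`. -/
theorem statement3 (p n : ℕ) (hp : p.Prime) (hodd : Odd p) (hn : 0 < n) :
    (∀ k : ℕ, 1 ≤ k → k ≤ n → ¬ p ∣ Nat.choose (2 ^ k) (2 ^ (k - 1))) ↔ 2 ^ n < p := by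
  constructor
  · intro not_dvd
    by_contra! le_pow
    exact not_dvd (Nat.clog 2 p) (Nat.clog_pos one_lt_two hp.two_le)
      (Nat.clog_le_of_le_pow le_pow) (prime_dvd_choose_two_pow_clog hp)
  · intro pow_lt k _ hkn
    have half_le : 2 ^ (k - 1) ≤ 2 ^ k := Nat.pow_le_pow_right two_pos (Nat.sub_le k 1)
    have pow_k_lt : 2 ^ k < p := (Nat.pow_le_pow_right two_pos hkn).trans_lt pow_lt
    exact hp.coprime_iff_not_dvd.mp (hp.coprime_choose_of_lt pow_k_lt half_le)
end

section
/- Let L be a Lie algebra over a field F of characteristic 0, let I be a solvable ideal of L of derived length n, and let D be a derivation of L. Then the ideal I + D(I) is solvable of derived length at most 2n. -/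
/-!
Call `x` of order at least `m` modulo `I` if `x, D x, …, D ^ (m - 1) x` all lie in `I`. If `x` and
`y` have orders at least `a` and `b`, then in the Leibniz expansion of `D ^ (a + b) ⁅x, y⁆` every
term lies in `I` except `(a + b).choose a • ⁅D ^ a x, D ^ b y⁆`. Once these binomial coefficients
are invertible, induction on `k` shows that, modulo `I`, every element of the `k`-th derived ideal
of `I + D(I)` is `D ^ (2 ^ k) x` for some `x` in the `k`-th derived ideal of `I`. Hence the `n`-th
derived ideal of `I + D(I)` lies in `I`, and `n` further steps kill it.
-/

open LieAlgebra (derivedSeriesOfIdeal)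
open Finset.HasAntidiagonal (antidiagonal mem_antidiagonal)
open scoped Nat

section Filtration

variable {R M : Type*} [Semiring R] [AddCommMonoid M] [Module R M]

/-- The elements of order at least `m` modulo `I` with respect to `f`: those `x` for which
`x, f x, …, f ^ (m - 1) x` all lie in `I`. -/
def orderSubmodule (f : Module.End R M) (I : Submodule R M) (m : ℕ) : Submodule R M :=
  ⨅ j < m, I.comap (f ^ j)

/-- The elements congruent modulo `I` to the leading term `f ^ m x` of some `x ∈ N` of order at
least `m`. -/
def leadingTerms (f : Module.End R M) (I N : Submodule R M) (m : ℕ) : Submodule R M :=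
  I ⊔ (N ⊓ orderSubmodule f I m).map (f ^ m)

lemma mem_orderSubmodule {f : Module.End R M} {I : Submodule R M} {m : ℕ} {x : M} :
    x ∈ orderSubmodule f I m ↔ ∀ j < m, (f ^ j) x ∈ I := by
  simp [orderSubmodule]

lemma orderSubmodule_one (f : Module.End R M) (I : Submodule R M) : orderSubmodule f I 1 = I := by
  ext x
  simp [mem_orderSubmodule]

lemma leadingTerms_bot (f : Module.End R M) (I : Submodule R M) (m : ℕ) :
    leadingTerms f I ⊥ m = I := by
  simp [leadingTerms]

lemma leadingTerms_self_one (f : Module.End R M) (I : Submodule R M) :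
    leadingTerms f I I 1 = I ⊔ I.map f := by
  simp [leadingTerms, orderSubmodule_one]

end Filtration

lemma mem_leadingTerms {R M : Type*} [Semiring R] [AddCommGroup M] [Module R M]
    {f : Module.End R M} {I N : Submodule R M} {m : ℕ} {y : M} :
    y ∈ leadingTerms f I N m ↔ ∃ x ∈ N, x ∈ orderSubmodule f I m ∧ y - (f ^ m) x ∈ I := by
  simp only [leadingTerms, Submodule.mem_sup, Submodule.mem_map, Submodule.mem_inf]
  constructor
  · rintro ⟨i, hi, _, ⟨x, ⟨hxN, hx⟩, rfl⟩, rfl⟩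
    exact ⟨x, hxN, hx, by simpa using hi⟩
  · rintro ⟨x, hxN, hx, hi⟩
    exact ⟨_, hi, _, ⟨x, ⟨hxN, hx⟩, rfl⟩, sub_add_cancel _ _⟩

lemma isUnit_choose_of_isUnit_factorial {R : Type*} [CommSemiring R] {n k : ℕ} (hk : k ≤ n)
    (hn : IsUnit (n ! : R)) : IsUnit (n.choose k : R) := by
  rw [← Nat.choose_mul_factorial_mul_factorial hk, mul_assoc, Nat.cast_mul] at hn
  exact isUnit_of_mul_isUnit_left hn

section Derivation

variable {R L : Type*} [CommRing R] [LieRing L] [LieAlgebra R L]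
  {D : LieDerivation R L L} {I J K N N' : LieIdeal R L} {a b : ℕ} {x y : L}

lemma pow_lieDerivation_apply_lie (D : LieDerivation R L L) (m : ℕ) (x y : L) :
    (D.toLinearMap ^ m) ⁅x, y⁆ = ∑ ij ∈ antidiagonal m,
      m.choose ij.1 • ⁅(D.toLinearMap ^ ij.1) x, (D.toLinearMap ^ ij.2) y⁆ := by
  simpa [Module.End.pow_apply] using D.iterate_apply_lie m x y

lemma lie_pow_mem_of_mem_orderSubmodule (hx : x ∈ orderSubmodule D.toLinearMap I.toSubmodule a)
    (hy : y ∈ orderSubmodule D.toLinearMap I.toSubmodule b) {i j : ℕ} (hij : i < a ∨ j < b) :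
    ⁅(D.toLinearMap ^ i) x, (D.toLinearMap ^ j) y⁆ ∈ I := by
  rcases hij with hi | hj
  · exact lie_mem_left R L I _ _ (mem_orderSubmodule.mp hx i hi)
  · exact lie_mem_right R L I _ _ (mem_orderSubmodule.mp hy j hj)

lemma lie_mem_orderSubmodule_add (hx : x ∈ orderSubmodule D.toLinearMap I.toSubmodule a)
    (hy : y ∈ orderSubmodule D.toLinearMap I.toSubmodule b) :
    ⁅x, y⁆ ∈ orderSubmodule D.toLinearMap I.toSubmodule (a + b) := by
  refine mem_orderSubmodule.mpr fun m hm ↦ ?_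
  rw [pow_lieDerivation_apply_lie]
  refine sum_mem fun ij hij ↦ nsmul_mem (lie_pow_mem_of_mem_orderSubmodule hx hy ?_) _
  rw [mem_antidiagonal] at hij
  lia

lemma pow_add_lie_sub_choose_smul_lie_mem (hx : x ∈ orderSubmodule D.toLinearMap I.toSubmodule a)
    (hy : y ∈ orderSubmodule D.toLinearMap I.toSubmodule b) :
    (D.toLinearMap ^ (a + b)) ⁅x, y⁆ -
      (a + b).choose a • ⁅(D.toLinearMap ^ a) x, (D.toLinearMap ^ b) y⁆ ∈ I := by
  have hab : (a, b) ∈ antidiagonal (a + b) := mem_antidiagonal.mpr rfl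
  rw [pow_lieDerivation_apply_lie, ← Finset.add_sum_erase _ _ hab, add_sub_cancel_left]
  refine sum_mem fun ij hij ↦ nsmul_mem (lie_pow_mem_of_mem_orderSubmodule hx hy ?_) _
  rw [Finset.mem_erase, mem_antidiagonal, ne_eq, Prod.ext_iff] at hij
  lia

lemma lie_mem_leadingTerms_add (hab : IsUnit ((a + b).choose a : R))
    (hx : x ∈ leadingTerms D.toLinearMap I.toSubmodule N.toSubmodule a)
    (hy : y ∈ leadingTerms D.toLinearMap I.toSubmodule N'.toSubmodule b) :
    ⁅x, y⁆ ∈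
      leadingTerms D.toLinearMap I.toSubmodule (⁅N, N'⁆ : LieIdeal R L).toSubmodule (a + b) := by
  obtain ⟨p, hpN, hp, hxp⟩ := mem_leadingTerms.mp hx
  obtain ⟨q, hqN, hq, hyq⟩ := mem_leadingTerms.mp hy
  have leading_congr := pow_add_lie_sub_choose_smul_lie_mem hp hq
  set p' := (D.toLinearMap ^ a) p
  set q' := (D.toLinearMap ^ b) q
  have lie_congr : ⁅x, y⁆ - ⁅p', q'⁆ ∈ I := by
    have split : ⁅x, y⁆ - ⁅p', q'⁆ = ⁅x - p', y⁆ + ⁅p', y - q'⁆ := by simp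
    rw [split]
    exact add_mem (lie_mem_left R L I _ _ hxp) (lie_mem_right R L I _ _ hyq)
  rw [← Submodule.smul_mem_iff_of_isUnit _ hab, Nat.cast_smul_eq_nsmul]
  refine mem_leadingTerms.mpr
    ⟨⁅p, q⁆, LieSubmodule.lie_mem_lie hpN hqN, lie_mem_orderSubmodule_add hp hq, ?_⟩
  simpa [smul_sub] using sub_mem (nsmul_mem lie_congr ((a + b).choose a)) leading_congr

lemma lie_le_leadingTerms_add (hab : IsUnit ((a + b).choose a : R))
    (hJ : J.toSubmodule ≤ leadingTerms D.toLinearMap I.toSubmodule N.toSubmodule a)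
    (hK : K.toSubmodule ≤ leadingTerms D.toLinearMap I.toSubmodule N'.toSubmodule b) :
    (⁅J, K⁆ : LieIdeal R L).toSubmodule ≤
      leadingTerms D.toLinearMap I.toSubmodule (⁅N, N'⁆ : LieIdeal R L).toSubmodule (a + b) := by
  rw [LieSubmodule.lieIdeal_oper_eq_linear_span', Submodule.span_le]
  rintro _ ⟨x, hx, y, hy, rfl⟩
  exact lie_mem_leadingTerms_add hab (hJ hx) (hK hy)

lemma derivedSeriesOfIdeal_le_leadingTerms
    (hJ : J.toSubmodule ≤ I.toSubmodule ⊔ I.toSubmodule.map D.toLinearMap) (k : ℕ)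
    (hk : IsUnit ((2 ^ k)! : R)) :
    (derivedSeriesOfIdeal R L k J).toSubmodule ≤
      leadingTerms D.toLinearMap I.toSubmodule
        (derivedSeriesOfIdeal R L k I).toSubmodule (2 ^ k) := by
  induction k with
  | zero => simpa [leadingTerms_self_one] using hJ
  | succ k ih =>
    rw [pow_succ, mul_two] at hk ⊢
    have hfactorial : IsUnit ((2 ^ k)! : R) := isUnit_of_dvd_unit
      (Nat.cast_dvd_cast (Nat.factorial_dvd_factorial (Nat.le_add_right _ _))) hk
    have hchoose : IsUnit ((2 ^ k + 2 ^ k).choose (2 ^ k) : R) :=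
      isUnit_choose_of_isUnit_factorial (Nat.le_add_right _ _) hk
    simp only [LieAlgebra.derivedSeriesOfIdeal_succ]
    exact lie_le_leadingTerms_add hchoose (ih hfactorial) (ih hfactorial)

end Derivation

theorem statement4_general {R L : Type*} [CommRing R] [LieRing L] [LieAlgebra R L]
    {I J : LieIdeal R L} {D : LieDerivation R L L} {n : ℕ} (hn : IsUnit ((2 ^ n)! : R))
    (hsolv : derivedSeriesOfIdeal R L n I = ⊥)
    (hJ : J.toSubmodule ≤ I.toSubmodule ⊔ I.toSubmodule.map D.toLinearMap) :
    derivedSeriesOfIdeal R L (2 * n) J = ⊥ := by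
  have hJI : derivedSeriesOfIdeal R L n J ≤ I := by
    simpa [hsolv, leadingTerms_bot] using derivedSeriesOfIdeal_le_leadingTerms hJ n hn
  rw [two_mul, LieAlgebra.derivedSeriesOfIdeal_add, eq_bot_iff, ← hsolv]
  exact LieAlgebra.derivedSeriesOfIdeal_mono hJI n

/-- Let `L` be a Lie algebra over a field `F` of characteristic `0`, let
`I` be a solvable ideal of `L` of derived length `n`, and let `D` be a derivation of `L`.
Then the ideal `I + D(I)` is solvable of derived length at most `2n`. -/
theorem statement4 (F L : Type*) [Field F] [CharZero F] [LieRing L] [LieAlgebra F L]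
    (I : LieIdeal F L) (n : ℕ)
    (hsolv : LieAlgebra.derivedSeriesOfIdeal F L n I = ⊥)
    (hmin : ∀ m < n, LieAlgebra.derivedSeriesOfIdeal F L m I ≠ ⊥)
    (D : LieDerivation F L L)
    (J : LieIdeal F L)
    (hJ : J.toSubmodule = I.toSubmodule ⊔ Submodule.map D.toLinearMap I.toSubmodule) :
    LieAlgebra.derivedSeriesOfIdeal F L (2 * n) J = ⊥ :=
  statement4_general (Nat.cast_ne_zero.mpr (2 ^ n).factorial_ne_zero).isUnit hsolv hJ.le
end

section
/- Let L be a Lie algebra over a field F of characteristic p > 0, let I be a solvable ideal of L of derived length n with n < log₂ p (equivalently 2ⁿ < p), and let D be a derivation of L. Then the ideal I + D(I) is solvable of derived length at most 2n. -/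
/-!
Let `Vₘ` be the ideal of those `a` with `a, D a, …, Dᵐ⁻¹ a ∈ I`. By the Leibniz rule
`⁅Vₘ, Vₖ⁆ ≤ Vₘ₊ₖ`, so that `I⁽ᵏ⁾ ≤ V_{2ᵏ}`; moreover, for `a ∈ Vₘ` and `b ∈ Vₖ`, modulo `I` only
the term `(m + k).choose m • ⁅Dᵐ a, Dᵏ b⁆` of `Dᵐ⁺ᵏ ⁅a, b⁆` survives. As long as these binomial
coefficients are invertible, it follows by induction that `(I + D(I))⁽ᵏ⁾ ≤ I + D^{2ᵏ}(I⁽ᵏ⁾)`. If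
`I⁽ⁿ⁾ = 0`, then `(I + D(I))⁽ⁿ⁾ ≤ I`, and another `n` steps of the derived series reach `0`.
-/

open LieAlgebra

theorem isUnit_natCast_choose {R : Type*} [CommSemiring R] {n k : ℕ}
    (hn : IsUnit (n.factorial : R)) (hk : k ≤ n) : IsUnit (n.choose k : R) := by
  rw [← Nat.choose_mul_factorial_mul_factorial hk, mul_assoc, Nat.cast_mul] at hn
  exact isUnit_of_mul_isUnit_left hn

section

variable {R L : Type*} [CommRing R] [LieRing L] [LieAlgebra R L]
variable {D : LieDerivation R L L} {I : LieIdeal R L} {m k : ℕ} {a b : L}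

theorem lie_iterate_mem (ha : ∀ i < m, D^[i] a ∈ I) (hb : ∀ j < k, D^[j] b ∈ I)
    {i j : ℕ} (hij : i < m ∨ j < k) : ⁅D^[i] a, D^[j] b⁆ ∈ I :=
  hij.elim (fun hi ↦ lie_mem_left R L I _ _ (ha i hi)) (fun hj ↦ lie_mem_right R L I _ _ (hb j hj))

theorem iterate_lie_mem (ha : ∀ i < m, D^[i] a ∈ I) (hb : ∀ j < k, D^[j] b ∈ I) :
    ∀ i < m + k, D^[i] ⁅a, b⁆ ∈ I := by
  intro i hi
  rw [D.iterate_apply_lie]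
  refine sum_mem fun ij hij ↦ nsmul_mem (lie_iterate_mem ha hb ?_) _
  have := Finset.HasAntidiagonal.mem_antidiagonal.mp hij
  omega

theorem iterate_add_lie_sub_choose_nsmul_mem (ha : ∀ i < m, D^[i] a ∈ I)
    (hb : ∀ j < k, D^[j] b ∈ I) :
    D^[m + k] ⁅a, b⁆ - (m + k).choose m • ⁅D^[m] a, D^[k] b⁆ ∈ I := by
  have hmk : (m, k) ∈ Finset.HasAntidiagonal.antidiagonal (m + k) :=
    Finset.HasAntidiagonal.mem_antidiagonal.mpr rfl
  rw [D.iterate_apply_lie, ← Finset.sum_erase_add _ _ hmk, add_sub_cancel_right]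
  refine sum_mem fun ij hij ↦ nsmul_mem (lie_iterate_mem ha hb ?_) _
  rw [Finset.mem_erase, Finset.HasAntidiagonal.mem_antidiagonal, Ne, Prod.ext_iff] at hij
  omega

variable (D I)

/-- The ideal of all `a` such that `D^[i] a ∈ I` for every `i < m`. These ideals form a decreasing
filtration of `L`, starting with `L` and `I`, with respect to which the bracket is additive in
degrees. -/
def iterateComap (m : ℕ) : LieIdeal R L where
  carrier := {a | ∀ i < m, D^[i] a ∈ I}
  zero_mem' := by simp [iterate_map_zero]
  add_mem' ha hb i hi := by
    rw [iterate_map_add]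
    exact add_mem (ha i hi) (hb i hi)
  smul_mem' c a ha i hi := by
    rw [← D.coeFn_coe, ← Module.End.pow_apply, map_smul, Module.End.pow_apply]
    exact I.smul_mem c (ha i hi)
  lie_mem ha i hi := iterate_lie_mem (m := 0) (by simp) ha i (by omega)

variable {D I} in
theorem mem_iterateComap : a ∈ iterateComap D I m ↔ ∀ i < m, D^[i] a ∈ I := Iff.rfl

theorem lie_iterateComap_le (m k : ℕ) :
    ⁅iterateComap D I m, iterateComap D I k⁆ ≤ iterateComap D I (m + k) :=
  (LieSubmodule.lie_le_iff _ _ _).mpr fun _ ha _ hb ↦ iterate_lie_mem ha hb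

theorem derivedSeriesOfIdeal_le_iterateComap (k : ℕ) :
    derivedSeriesOfIdeal R L k I ≤ iterateComap D I (2 ^ k) := by
  induction k with
  | zero => intro a ha; simpa [mem_iterateComap] using ha
  | succ k ih =>
    rw [derivedSeriesOfIdeal_succ, pow_succ, mul_two]
    exact (LieSubmodule.mono_lie ih ih).trans (lie_iterateComap_le D I _ _)

variable {D I}

theorem lie_iterate_mem_sup_map {A B : LieIdeal R L} (hA : A ≤ iterateComap D I m)
    (hB : B ≤ iterateComap D I k) (hmk : IsUnit ((m + k).choose m : R)) (ha : a ∈ A) (hb : b ∈ B) :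
    ⁅D^[m] a, D^[k] b⁆ ∈
      I.toSubmodule ⊔ (⁅A, B⁆ : LieIdeal R L).toSubmodule.map (D.toLinearMap ^ (m + k)) := by
  rw [← Submodule.smul_mem_iff_of_isUnit _ hmk, Nat.cast_smul_eq_nsmul,
    ← sub_sub_cancel (D^[m + k] ⁅a, b⁆) (_ • _)]
  refine sub_mem (Submodule.mem_sup_right ⟨⁅a, b⁆, LieSubmodule.lie_mem_lie ha hb, ?_⟩)
    (Submodule.mem_sup_left (iterate_add_lie_sub_choose_nsmul_mem (hA ha) (hB hb)))
  rw [Module.End.pow_apply, D.coeFn_coe]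

theorem lie_le_sup_map {A B X Y : LieIdeal R L} (hA : A ≤ iterateComap D I m)
    (hB : B ≤ iterateComap D I k) (hmk : IsUnit ((m + k).choose m : R))
    (hX : X.toSubmodule ≤ I.toSubmodule ⊔ A.toSubmodule.map (D.toLinearMap ^ m))
    (hY : Y.toSubmodule ≤ I.toSubmodule ⊔ B.toSubmodule.map (D.toLinearMap ^ k)) :
    (⁅X, Y⁆ : LieIdeal R L).toSubmodule ≤
      I.toSubmodule ⊔ (⁅A, B⁆ : LieIdeal R L).toSubmodule.map (D.toLinearMap ^ (m + k)) := by
  rw [LieSubmodule.lieIdeal_oper_eq_linear_span', Submodule.span_le]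
  rintro _ ⟨x, hx, y, hy, rfl⟩
  obtain ⟨u, hu, _, ⟨a, ha, rfl⟩, rfl⟩ := Submodule.mem_sup.mp (hX hx)
  obtain ⟨v, hv, _, ⟨b, hb, rfl⟩, rfl⟩ := Submodule.mem_sup.mp (hY hy)
  rw [add_lie, lie_add ((D.toLinearMap ^ m) a)]
  refine add_mem (Submodule.mem_sup_left (lie_mem_left R L I _ _ hu))
    (add_mem (Submodule.mem_sup_left (lie_mem_right R L I _ _ hv)) ?_)
  simpa only [Module.End.pow_apply, D.coeFn_coe] using lie_iterate_mem_sup_map hA hB hmk ha hb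

variable (D I)

/-- The ideal `I + D(I)`, that is, the sum of `I` and its image under `D`; it is an ideal because
`⁅x, D a⁆ = D ⁅x, a⁆ - ⁅D x, a⁆`. -/
def supMap : LieIdeal R L where
  __ := I.toSubmodule ⊔ I.toSubmodule.map D.toLinearMap
  lie_mem {x y} hy := by
    obtain ⟨u, hu, _, ⟨a, ha, rfl⟩, rfl⟩ := Submodule.mem_sup.mp hy
    have hDa : ⁅x, D a⁆ = D ⁅x, a⁆ - ⁅D x, a⁆ := by rw [D.apply_lie_eq_add, add_sub_cancel_right]
    refine Submodule.mem_sup.mpr ⟨⁅x, u⁆ - ⁅D x, a⁆, sub_mem (I.lie_mem hu) (I.lie_mem ha),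
      D ⁅x, a⁆, ⟨_, I.lie_mem ha, rfl⟩, ?_⟩
    rw [lie_add, D.coeFn_coe, hDa]
    abel

theorem toSubmodule_supMap :
    (supMap D I).toSubmodule = I.toSubmodule ⊔ I.toSubmodule.map D.toLinearMap := rfl

theorem derivedSeriesOfIdeal_supMap_le (hk : IsUnit ((2 ^ k).factorial : R)) :
    (derivedSeriesOfIdeal R L k (supMap D I)).toSubmodule ≤
      I.toSubmodule ⊔ (derivedSeriesOfIdeal R L k I).toSubmodule.map (D.toLinearMap ^ 2 ^ k) := by
  induction k with
  | zero => simp [toSubmodule_supMap]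
  | succ k ih =>
    have hle := derivedSeriesOfIdeal_le_iterateComap D I k
    have ih := ih (hk.natCast_factorial_of_le (Nat.pow_le_pow_right two_pos k.le_succ))
    simp only [derivedSeriesOfIdeal_succ]
    rw [pow_succ, mul_two] at hk ⊢
    exact lie_le_sup_map hle hle (isUnit_natCast_choose hk (Nat.le_add_right _ _)) ih ih

theorem statement5_general (n : ℕ) (hn : IsUnit ((2 ^ n).factorial : R))
    (hI : derivedSeriesOfIdeal R L n I = ⊥) :
    derivedSeriesOfIdeal R L (2 * n) (supMap D I) = ⊥ := by
  have hle : derivedSeriesOfIdeal R L n (supMap D I) ≤ I := by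
    simpa [hI] using derivedSeriesOfIdeal_supMap_le D I hn
  rw [two_mul, derivedSeriesOfIdeal_add, eq_bot_iff, ← hI]
  exact derivedSeriesOfIdeal_mono hle n

end

/-- Let `L` be a Lie algebra over a field `F` of characteristic `p > 0`,
let `I` be a solvable ideal of `L` of derived length `n` with `n < log₂ p` (equivalently
`2ⁿ < p`), and let `D` be a derivation of `L`. Then the ideal `I + D(I)` is solvable of
derived length at most `2n`. -/
theorem statement5 (F L : Type*) [Field F] [LieRing L] [LieAlgebra F L]
    (p : ℕ) [CharP F p] (hp : 0 < p)
    (I : LieIdeal F L) (n : ℕ)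
    (hsolv : LieAlgebra.derivedSeriesOfIdeal F L n I = ⊥)
    (hmin : ∀ m < n, LieAlgebra.derivedSeriesOfIdeal F L m I ≠ ⊥)
    (hnp : 2 ^ n < p)
    (D : LieDerivation F L L)
    (J : LieIdeal F L)
    (hJ : J.toSubmodule = I.toSubmodule ⊔ Submodule.map D.toLinearMap I.toSubmodule) :
    LieAlgebra.derivedSeriesOfIdeal F L (2 * n) J = ⊥ := by
  obtain rfl : J = supMap D I := LieSubmodule.toSubmodule_injective hJ
  have : NeZero p := .of_pos hp
  have : Fact p.Prime := CharP.char_is_prime_of_pos F p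
  exact statement5_general D I n ((IsUnit.natCast_factorial_iff_of_charP p).mpr hnp) hsolv
end

section
/- Let L be a Lie algebra over a field F of characteristic 0 or characteristic p > 2, let I be a solvable ideal of L of derived length n, and let D be a derivation of L; write J = I + D(I). Then for every k with 1 ≤ k ≤ n such that char F does not divide any of the binomial coefficients C(2,1), C(4,2), …, C(2ᵏ, 2ᵏ⁻¹), one has J⁽ᵏ⁾ ⊆ D^{2^k}(I⁽ᵏ⁾) + I. -/
/-!
Write `Fₘ` for the ideal of all `x` with `x, D x, …, Dᵐ⁻¹ x ∈ I`. By the Leibniz rule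
`[Fₘ, Fₙ] ⊆ Fₘ₊ₙ`, hence `I⁽ᵏ⁾ ⊆ F_{2ᵏ}`. For `a ∈ Fₘ` and `b ∈ Fₙ`, the only term of the Leibniz
expansion of `Dᵐ⁺ⁿ[a, b]` that survives modulo `I` is `C(m + n, m) [Dᵐ a, Dⁿ b]`. When the binomial
coefficient is invertible, `[Dᵐ a, Dⁿ b]` is therefore a multiple of `Dᵐ⁺ⁿ[a, b]` modulo `I`, and
taking `m = n = 2ᵏ` passes from `J⁽ᵏ⁾` to `J⁽ᵏ⁺¹⁾`.
-/

section

open Finset LieAlgebra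

variable {R L : Type*} [CommRing R] [LieRing L] [LieAlgebra R L]
  (D : LieDerivation R L L) (I : LieIdeal R L)

theorem toLinearMap_pow_apply_lie (n : ℕ) (a b : L) :
    (D.toLinearMap ^ n) ⁅a, b⁆ = ∑ ij ∈ antidiagonal n,
      n.choose ij.1 • ⁅(D.toLinearMap ^ ij.1) a, (D.toLinearMap ^ ij.2) b⁆ := by
  simp only [Module.End.pow_apply]
  exact D.iterate_apply_lie n a b

/-- The ideal of all `x` such that `x, D x, …, Dᵐ⁻¹ x` lie in `I`. For increasing `m` these ideals
form a descending filtration of `L`, which measures how far an element can be differentiated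
without leaving `I`; the index is chosen so that the `0`-th ideal is all of `L` and the first one
is `I`. -/
def derivFiltration (m : ℕ) : LieIdeal R L where
  carrier := {x | ∀ i < m, (D.toLinearMap ^ i) x ∈ I}
  zero_mem' i _ := by simp only [map_zero, zero_mem]
  add_mem' hx hy i hi := by simpa only [map_add] using add_mem (hx i hi) (hy i hi)
  smul_mem' c x hx i hi := by
    rw [map_smul]
    exact I.smul_mem c (hx i hi)
  lie_mem {x a} ha i hi := by
    rw [toLinearMap_pow_apply_lie]
    refine sum_mem fun pq hpq => nsmul_mem (lie_mem_right R L I _ _ (ha _ ?_)) _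
    exact (HasAntidiagonal.antidiagonal.snd_le hpq).trans_lt hi

namespace derivFiltration

variable {D I} {m n : ℕ} {a b : L}

theorem mem_iff : a ∈ derivFiltration D I m ↔ ∀ i < m, (D.toLinearMap ^ i) a ∈ I :=
  Iff.rfl

theorem lie_pow_apply_mem (ha : a ∈ derivFiltration D I m) (hb : b ∈ derivFiltration D I n)
    {p q : ℕ} (hpq : p < m ∨ q < n) :
    ⁅(D.toLinearMap ^ p) a, (D.toLinearMap ^ q) b⁆ ∈ I :=
  hpq.elim (fun hp => lie_mem_left R L I _ _ (ha p hp)) fun hq => lie_mem_right R L I _ _ (hb q hq)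

variable (D I m n) in
theorem lie_le_add :
    ⁅derivFiltration D I m, derivFiltration D I n⁆ ≤ derivFiltration D I (m + n) := by
  refine (LieSubmodule.lie_le_iff ..).2 fun a ha b hb => mem_iff.2 fun i hi => ?_
  rw [toLinearMap_pow_apply_lie]
  refine sum_mem fun pq hpq => nsmul_mem (lie_pow_apply_mem ha hb ?_) _
  have hsum : pq.1 + pq.2 = i := mem_antidiagonal.1 hpq
  omega

theorem pow_add_apply_lie_sub_mem (ha : a ∈ derivFiltration D I m)
    (hb : b ∈ derivFiltration D I n) :
    (D.toLinearMap ^ (m + n)) ⁅a, b⁆ -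
      (m + n).choose m • ⁅(D.toLinearMap ^ m) a, (D.toLinearMap ^ n) b⁆ ∈ I := by
  have hmn : (m, n) ∈ antidiagonal (m + n) := mem_antidiagonal.2 rfl
  rw [toLinearMap_pow_apply_lie, ← add_sum_erase _ _ hmn, add_sub_cancel_left]
  refine sum_mem fun pq hpq => nsmul_mem (lie_pow_apply_mem ha hb ?_) _
  obtain ⟨hne, hmem⟩ := mem_erase.1 hpq
  have hsum : pq.1 + pq.2 = m + n := mem_antidiagonal.1 hmem
  rw [Ne, Prod.ext_iff] at hne
  omega

variable (D I) in
theorem derivedSeriesOfIdeal_le (k : ℕ) :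
    derivedSeriesOfIdeal R L k I ≤ derivFiltration D I (2 ^ k) := by
  induction k with
  | zero =>
    intro x hx i hi
    obtain rfl : i = 0 := by simpa using hi
    simpa using hx
  | succ k ih =>
    rw [derivedSeriesOfIdeal_succ, pow_succ, mul_two]
    exact (LieSubmodule.mono_lie ih ih).trans (lie_le_add D I _ _)

variable {A B X Y : LieIdeal R L}

theorem lie_pow_apply_mem_map_sup (hA : A ≤ derivFiltration D I m)
    (hB : B ≤ derivFiltration D I n) (hunit : IsUnit ((m + n).choose m : R))
    (ha : a ∈ A) (hb : b ∈ B) :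
    ⁅(D.toLinearMap ^ m) a, (D.toLinearMap ^ n) b⁆ ∈
      Submodule.map (D.toLinearMap ^ (m + n)) ⁅A, B⁆.toSubmodule ⊔ I.toSubmodule := by
  have hlead : (D.toLinearMap ^ (m + n)) ⁅a, b⁆ ∈
      Submodule.map (D.toLinearMap ^ (m + n)) ⁅A, B⁆.toSubmodule :=
    Submodule.mem_map_of_mem (LieSubmodule.lie_mem_lie ha hb)
  have hrest := pow_add_apply_lie_sub_mem (hA ha) (hB hb)
  rw [← Submodule.smul_mem_iff_of_isUnit _ hunit, Nat.cast_smul_eq_nsmul]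
  simpa only [sub_sub_cancel] using
    sub_mem (Submodule.mem_sup_left hlead) (Submodule.mem_sup_right hrest)

theorem lie_le_map_sup (hA : A ≤ derivFiltration D I m) (hB : B ≤ derivFiltration D I n)
    (hunit : IsUnit ((m + n).choose m : R))
    (hX : X.toSubmodule ≤ Submodule.map (D.toLinearMap ^ m) A.toSubmodule ⊔ I.toSubmodule)
    (hY : Y.toSubmodule ≤ Submodule.map (D.toLinearMap ^ n) B.toSubmodule ⊔ I.toSubmodule) :
    ⁅X, Y⁆.toSubmodule ≤
      Submodule.map (D.toLinearMap ^ (m + n)) ⁅A, B⁆.toSubmodule ⊔ I.toSubmodule := by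
  rw [LieSubmodule.lieIdeal_oper_eq_linear_span', Submodule.span_le]
  rintro _ ⟨x, hx, y, hy, rfl⟩
  obtain ⟨_, ⟨a, ha, rfl⟩, u, hu, rfl⟩ := Submodule.mem_sup.1 (hX hx)
  obtain ⟨_, ⟨b, hb, rfl⟩, v, hv, rfl⟩ := Submodule.mem_sup.1 (hY hy)
  rw [add_lie, lie_add, add_assoc]
  refine add_mem (lie_pow_apply_mem_map_sup hA hB hunit ha hb) (Submodule.mem_sup_right ?_)
  exact add_mem (lie_mem_right R L I _ _ hv) (lie_mem_left R L I _ _ hu)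

end derivFiltration

theorem statement6_general (J : LieIdeal R L)
    (hJ : J.toSubmodule = I.toSubmodule ⊔ Submodule.map D.toLinearMap I.toSubmodule)
    (k : ℕ) (hunit : ∀ j < k, IsUnit ((2 ^ j).centralBinom : R)) :
    (derivedSeriesOfIdeal R L k J).toSubmodule ≤
      Submodule.map (D.toLinearMap ^ 2 ^ k) (derivedSeriesOfIdeal R L k I).toSubmodule ⊔
        I.toSubmodule := by
  induction k with
  | zero => simp only [derivedSeriesOfIdeal_zero, pow_zero, pow_one, hJ, sup_comm, le_refl]
  | succ k ih =>
    have hJk := ih fun j hj => hunit j (by omega)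
    have hIk := derivFiltration.derivedSeriesOfIdeal_le D I k
    have hchoose := hunit k k.lt_succ_self
    rw [Nat.centralBinom, two_mul] at hchoose
    rw [derivedSeriesOfIdeal_succ, derivedSeriesOfIdeal_succ, pow_succ, mul_two]
    exact derivFiltration.lie_le_map_sup hIk hIk hchoose hJk hJk

end

/-- Let `L` be a Lie algebra over a field `F` of characteristic `0` or
characteristic `p > 2` (i.e. `ringChar F ≠ 2`), let `I` be a solvable ideal of `L` of
derived length `n`, and let `D` be a derivation of `L`; write `J = I + D(I)`. Then for
every `k` with `1 ≤ k ≤ n` such that `char F` does not divide any of the binomial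
coefficients `C(2,1), C(4,2), …, C(2ᵏ, 2ᵏ⁻¹)` (equivalently, these are nonzero in `F`),
one has `J⁽ᵏ⁾ ⊆ D^{2^k}(I⁽ᵏ⁾) + I`. -/
theorem statement6 (F L : Type*) [Field F] [LieRing L] [LieAlgebra F L]
    (hcharF : ringChar F ≠ 2)
    (I : LieIdeal F L) (n : ℕ)
    (hsolv : LieAlgebra.derivedSeriesOfIdeal F L n I = ⊥)
    (hmin : ∀ m < n, LieAlgebra.derivedSeriesOfIdeal F L m I ≠ ⊥)
    (D : LieDerivation F L L)
    (J : LieIdeal F L)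
    (hJ : J.toSubmodule = I.toSubmodule ⊔ Submodule.map D.toLinearMap I.toSubmodule)
    (k : ℕ) (hk1 : 1 ≤ k) (hkn : k ≤ n)
    (hbinom : ∀ j : ℕ, 1 ≤ j → j ≤ k → (Nat.choose (2 ^ j) (2 ^ (j - 1)) : F) ≠ 0) :
    (LieAlgebra.derivedSeriesOfIdeal F L k J).toSubmodule ≤
      Submodule.map (D.toLinearMap ^ 2 ^ k)
          (LieAlgebra.derivedSeriesOfIdeal F L k I).toSubmodule ⊔
        I.toSubmodule := by
  refine statement6_general D I J hJ k fun j hj => isUnit_iff_ne_zero.2 ?_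
  simpa [Nat.centralBinom, pow_succ'] using hbinom (j + 1) (by omega) hj
end

section
/- Let L be a Lie algebra over a field F whose characteristic is not 2, let I be an ideal of L, and let D be a derivation of L; write J = I + D(I). Then the derived ideal J⁽¹⁾ = [J, J] is contained in D²(I⁽¹⁾) + I, where I⁽¹⁾ = [I, I]. -/
/-!
For `a, b ∈ I` the Leibniz rule gives `D²[a, b] ≡ 2[D a, D b]` modulo `I`. Once `2` is inverted,
`[D a, D b]` lies in `D²[I, I] + I`; every other term of a bracket in `I + D(I)` lies in `I`.
-/

section

variable {R L : Type*} [CommRing R] [LieRing L] [LieAlgebra R L]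

theorem lieDerivation_apply_apply_lie (D : LieDerivation R L L) (a b : L) :
    D (D ⁅a, b⁆) = ⁅a, D (D b)⁆ + ⁅D (D a), b⁆ + (2 : R) • ⁅D a, D b⁆ := by
  simp only [LieDerivation.apply_lie_eq_add, map_add, two_smul]
  abel

theorem lie_lieDerivation_apply_mem (h2 : IsUnit (2 : R)) (D : LieDerivation R L L)
    {I₁ I₂ : LieIdeal R L} {a b : L} (ha : a ∈ I₁) (hb : b ∈ I₂) :
    ⁅D a, D b⁆ ∈ Submodule.map (D.toLinearMap ^ 2) (⁅I₁, I₂⁆ : LieIdeal R L).toSubmodule ⊔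
      (I₁.toSubmodule ⊔ I₂.toSubmodule) := by
  have hD : D (D ⁅a, b⁆) ∈
      Submodule.map (D.toLinearMap ^ 2) (⁅I₁, I₂⁆ : LieIdeal R L).toSubmodule :=
    ⟨⁅a, b⁆, LieSubmodule.lie_mem_lie ha hb, by rw [pow_two]; rfl⟩
  have hI : ⁅a, D (D b)⁆ + ⁅D (D a), b⁆ ∈ I₁.toSubmodule ⊔ I₂.toSubmodule :=
    Submodule.add_mem_sup (lie_mem_left R L I₁ _ _ ha) (lie_mem_right R L I₂ _ _ hb)
  rw [← Submodule.smul_mem_iff_of_isUnit _ h2,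
    eq_sub_of_add_eq' (lieDerivation_apply_apply_lie D a b).symm]
  exact Submodule.sub_mem _ (Submodule.mem_sup_left hD) (Submodule.mem_sup_right hI)

theorem statement7_general (h2 : IsUnit (2 : R)) (D : LieDerivation R L L)
    {I₁ I₂ J₁ J₂ : LieIdeal R L}
    (hJ₁ : J₁.toSubmodule = I₁.toSubmodule ⊔ Submodule.map D.toLinearMap I₁.toSubmodule)
    (hJ₂ : J₂.toSubmodule = I₂.toSubmodule ⊔ Submodule.map D.toLinearMap I₂.toSubmodule) :
    (⁅J₁, J₂⁆ : LieIdeal R L).toSubmodule ≤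
      Submodule.map (D.toLinearMap ^ 2) (⁅I₁, I₂⁆ : LieIdeal R L).toSubmodule ⊔
        (I₁.toSubmodule ⊔ I₂.toSubmodule) := by
  rw [LieSubmodule.lieIdeal_oper_eq_linear_span', Submodule.span_le]
  rintro _ ⟨x, hx, y, hy, rfl⟩
  rw [← LieSubmodule.mem_toSubmodule, hJ₁, Submodule.mem_sup] at hx
  rw [← LieSubmodule.mem_toSubmodule, hJ₂, Submodule.mem_sup] at hy
  obtain ⟨a, ha, _, ⟨c, hc, rfl⟩, rfl⟩ := hx
  obtain ⟨b, hb, _, ⟨e, he, rfl⟩, rfl⟩ := hy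
  have hI : ⁅a, b + D e⁆ + ⁅D c, b⁆ ∈ I₁.toSubmodule ⊔ I₂.toSubmodule :=
    Submodule.add_mem_sup (lie_mem_left R L I₁ _ _ ha) (lie_mem_right R L I₂ _ _ hb)
  have expand : ⁅a + D c, b + D e⁆ = ⁅a, b + D e⁆ + ⁅D c, b⁆ + ⁅D c, D e⁆ := by
    rw [add_lie, lie_add (D c), add_assoc]
  exact expand ▸ Submodule.add_mem _ (Submodule.mem_sup_right hI)
    (lie_lieDerivation_apply_mem h2 D hc he)

end

/-- Let `L` be a Lie algebra over a field `F` with `char F ≠ 2`, let `I`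
be an ideal of `L`, and let `D` be a derivation of `L`; write `J = I + D(I)`. Then the
derived ideal `J⁽¹⁾ = [J, J]` is contained in `D²(I⁽¹⁾) + I`, where `I⁽¹⁾ = [I, I]`. -/
theorem statement7 (F L : Type*) [Field F] [LieRing L] [LieAlgebra F L]
    (hcharF : ringChar F ≠ 2)
    (I : LieIdeal F L) (D : LieDerivation F L L)
    (J : LieIdeal F L)
    (hJ : J.toSubmodule = I.toSubmodule ⊔ Submodule.map D.toLinearMap I.toSubmodule) :
    (⁅J, J⁆ : LieIdeal F L).toSubmodule ≤
      Submodule.map (D.toLinearMap ^ 2) (⁅I, I⁆ : LieIdeal F L).toSubmodule ⊔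
        I.toSubmodule := by
  simpa only [sup_idem] using
    statement7_general (Ring.two_ne_zero hcharF).isUnit D hJ hJ
end

section
/- Let L be a Lie algebra over a field F of characteristic 0, and let S(L) denote the sum of all solvable ideals of L. Then S(L) is a characteristic ideal of L, i.e. D(S(L)) ⊆ S(L) for every derivation D of L. -/
/-!
Filter `L` by the ideals `I_n = {x | D^i x ∈ I for all i < n}`. The Leibniz rule shows both that
`⁅I_m, I_n⁆ ⊆ I_{m+n}` and that, modulo `I`, the map `D^(m+n)` sends `⁅x, y⁆` to
`(m+n choose m) ⁅D^m x, D^n y⁆` for `x ∈ I_m`, `y ∈ I_n`. Once the binomial coefficients can be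
inverted, it follows that the `k`-th derived ideal of `I + D(I)` lies in `I + D^(2^k)(I⁽ᵏ⁾)`. Hence
if `I⁽ᵏ⁾ = 0` then `I + D(I)` is a solvable ideal, of derived length at most `2k`.
-/

section DifferentialPower

open LieAlgebra

variable {R L : Type*} [CommRing R] [LieRing L] [LieAlgebra R L]

theorem iterate_lie_mem_s8 (D : LieDerivation R L L) (I : LieIdeal R L) {i : ℕ} {x y : L}
    (h : ∀ p q, p + q = i → D^[p] x ∈ I ∨ D^[q] y ∈ I) : D^[i] ⁅x, y⁆ ∈ I := by
  rw [LieDerivation.iterate_apply_lie]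
  refine sum_mem fun pq hpq => nsmul_mem ?_ _
  rcases h pq.1 pq.2 (Finset.HasAntidiagonal.mem_antidiagonal.1 hpq) with hx | hy
  · exact lie_mem_left R L I _ _ hx
  · exact lie_mem_right R L I _ _ hy

theorem iterate_add_lie_sub_choose_nsmul_mem_s8 (D : LieDerivation R L L) (I : LieIdeal R L)
    {m n : ℕ} {x y : L} (hx : ∀ i < m, D^[i] x ∈ I) (hy : ∀ j < n, D^[j] y ∈ I) :
    D^[m + n] ⁅x, y⁆ - (m + n).choose m • ⁅D^[m] x, D^[n] y⁆ ∈ I := by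
  have hmn : (m, n) ∈ Finset.HasAntidiagonal.antidiagonal (m + n) :=
    Finset.HasAntidiagonal.mem_antidiagonal.2 rfl
  rw [LieDerivation.iterate_apply_lie, ← Finset.add_sum_erase _ _ hmn, add_sub_cancel_left]
  refine sum_mem fun ⟨p, q⟩ hpq => nsmul_mem ?_ _
  obtain ⟨hne, hadd⟩ : ¬(p = m ∧ q = n) ∧ p + q = m + n := by simpa using hpq
  rcases lt_or_ge p m with hp | hp
  · exact lie_mem_left R L I _ _ (hx p hp)
  · exact lie_mem_right R L I _ _ (hy q (by lia))

/-- The `n`-th differential power of the ideal `I` with respect to the derivation `D`: the elements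
`x` such that `x, D x, …, D^(n-1) x` all lie in `I`. It measures the order of vanishing modulo `I`;
in particular it is `⊤` for `n = 0` and `I` for `n = 1`. -/
def differentialPower (D : LieDerivation R L L) (I : LieIdeal R L) (n : ℕ) : LieIdeal R L where
  toSubmodule := ⨅ i < n, I.toSubmodule.comap (D.toLinearMap ^ i)
  lie_mem {x y} hy := by
    have hy' : ∀ i < n, D^[i] y ∈ I := by simpa [Module.End.pow_apply] using hy
    have hxy : ∀ i < n, D^[i] ⁅x, y⁆ ∈ I := fun i hi =>
      iterate_lie_mem_s8 D I fun p q hpq => Or.inr (hy' q (by lia))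
    simpa [Module.End.pow_apply] using hxy

theorem mem_differentialPower {D : LieDerivation R L L} {I : LieIdeal R L} {n : ℕ} {x : L} :
    x ∈ differentialPower D I n ↔ ∀ i < n, D^[i] x ∈ I := by
  rw [← LieSubmodule.mem_toSubmodule]
  simp [differentialPower, Module.End.pow_apply]

theorem differentialPower_one (D : LieDerivation R L L) (I : LieIdeal R L) :
    differentialPower D I 1 = I := by
  ext x
  simp [mem_differentialPower]

theorem lie_mem_differentialPower_add {D : LieDerivation R L L} {I : LieIdeal R L} {m n : ℕ}
    {x y : L} (hx : x ∈ differentialPower D I m) (hy : y ∈ differentialPower D I n) :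
    ⁅x, y⁆ ∈ differentialPower D I (m + n) := by
  rw [mem_differentialPower] at *
  refine fun i hi => iterate_lie_mem_s8 D I fun p q hpq => ?_
  rcases lt_or_ge p m with hp | hp
  · exact Or.inl (hx p hp)
  · exact Or.inr (hy q (by lia))

/-- The ideal `I + D^n(K ∩ I_n)`, where `I_n` is the `n`-th differential power of `I`. Modulo `I` it
consists of the leading terms of the elements of `K` that vanish to order `n`. Intersecting with
`I_n` is what makes this an ideal. -/
def leadingIdeal (D : LieDerivation R L L) (I : LieIdeal R L) (n : ℕ) (K : LieIdeal R L) :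
    LieIdeal R L where
  toSubmodule := I.toSubmodule ⊔
    (K ⊓ differentialPower D I n).toSubmodule.map (D.toLinearMap ^ n)
  lie_mem {z w} hw := by
    obtain ⟨a, ha, _, ⟨x, hx, rfl⟩, rfl⟩ := Submodule.mem_sup.1 hw
    have hmod : D^[n] ⁅z, x⁆ - ⁅z, D^[n] x⁆ ∈ I := by
      simpa using iterate_add_lie_sub_choose_nsmul_mem_s8 D I (m := 0) (x := z) (by simp)
        (mem_differentialPower.1 hx.2)
    have hsplit : ⁅z, a + (D.toLinearMap ^ n) x⁆ =
        (⁅z, a⁆ - (D^[n] ⁅z, x⁆ - ⁅z, D^[n] x⁆)) + (D.toLinearMap ^ n) ⁅z, x⁆ := by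
      simp only [Module.End.pow_apply, LieDerivation.coeFn_coe, lie_add]
      abel
    rw [hsplit]
    exact Submodule.add_mem_sup (sub_mem (lie_mem_right R L I _ _ ha) hmod)
      (Submodule.mem_map_of_mem (lie_mem_right R L _ _ _ hx))

theorem mem_leadingIdeal {D : LieDerivation R L L} {I K : LieIdeal R L} {n : ℕ} {z : L} :
    z ∈ leadingIdeal D I n K ↔
      ∃ a ∈ I, ∃ x ∈ K, x ∈ differentialPower D I n ∧ a + D^[n] x = z := by
  rw [← LieSubmodule.mem_toSubmodule]
  simp [leadingIdeal, Submodule.mem_sup, Module.End.pow_apply, and_assoc]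

theorem le_leadingIdeal (D : LieDerivation R L L) (I : LieIdeal R L) (n : ℕ) (K : LieIdeal R L) :
    I ≤ leadingIdeal D I n K :=
  fun a ha => mem_leadingIdeal.2 ⟨a, ha, 0, zero_mem _, zero_mem _, by simp⟩

theorem iterate_mem_leadingIdeal {D : LieDerivation R L L} {I K : LieIdeal R L} {n : ℕ} {x : L}
    (hxK : x ∈ K) (hxI : x ∈ differentialPower D I n) : D^[n] x ∈ leadingIdeal D I n K :=
  mem_leadingIdeal.2 ⟨0, zero_mem _, x, hxK, hxI, zero_add _⟩

theorem leadingIdeal_bot (D : LieDerivation R L L) (I : LieIdeal R L) (n : ℕ) :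
    leadingIdeal D I n ⊥ = I := by
  ext z
  simp [mem_leadingIdeal]

theorem lie_iterate_mem_leadingIdeal {D : LieDerivation R L L} {I K K' : LieIdeal R L} {m n : ℕ}
    (hunit : IsUnit ((m + n).choose m : R)) {x y : L}
    (hxK : x ∈ K) (hxI : x ∈ differentialPower D I m)
    (hyK : y ∈ K') (hyI : y ∈ differentialPower D I n) :
    ⁅D^[m] x, D^[n] y⁆ ∈ leadingIdeal D I (m + n) ⁅K, K'⁆ := by
  have hlead : D^[m + n] ⁅x, y⁆ ∈ leadingIdeal D I (m + n) ⁅K, K'⁆ :=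
    iterate_mem_leadingIdeal (LieSubmodule.lie_mem_lie hxK hyK)
      (lie_mem_differentialPower_add hxI hyI)
  have hmod := le_leadingIdeal D I (m + n) ⁅K, K'⁆ <| iterate_add_lie_sub_choose_nsmul_mem_s8 D I
    (mem_differentialPower.1 hxI) (mem_differentialPower.1 hyI)
  rw [← LieSubmodule.mem_toSubmodule, ← Submodule.smul_mem_iff_of_isUnit _ hunit,
    Nat.cast_smul_eq_nsmul]
  simpa only [sub_sub_cancel, LieSubmodule.mem_toSubmodule] using sub_mem hlead hmod

theorem lie_leadingIdeal_le (D : LieDerivation R L L) (I K K' : LieIdeal R L) {m n : ℕ}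
    (hunit : IsUnit ((m + n).choose m : R)) :
    ⁅leadingIdeal D I m K, leadingIdeal D I n K'⁆ ≤ leadingIdeal D I (m + n) ⁅K, K'⁆ := by
  rw [LieSubmodule.lie_le_iff]
  intro u hu v hv
  obtain ⟨a, ha, x, hxK, hxI, rfl⟩ := mem_leadingIdeal.1 hu
  obtain ⟨b, hb, y, hyK, hyI, rfl⟩ := mem_leadingIdeal.1 hv
  have hI := le_leadingIdeal D I (m + n) ⁅K, K'⁆
  rw [add_lie, lie_add (D^[m] x)]
  exact add_mem (hI (lie_mem_left R L I _ _ ha)) <| add_mem (hI (lie_mem_right R L I _ _ hb)) <|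
    lie_iterate_mem_leadingIdeal hunit hxK hxI hyK hyI

section RatAlgebra

variable [Algebra ℚ R]

theorem isUnit_natCast_of_ratAlgebra {n : ℕ} (hn : n ≠ 0) : IsUnit (n : R) := by
  simpa using (Nat.cast_ne_zero.2 hn : (n : ℚ) ≠ 0).isUnit.map (algebraMap ℚ R)

theorem derivedSeriesOfIdeal_leadingIdeal_one_le (D : LieDerivation R L L) (I : LieIdeal R L)
    (k : ℕ) :
    derivedSeriesOfIdeal R L k (leadingIdeal D I 1 I) ≤
      leadingIdeal D I (2 ^ k) (derivedSeriesOfIdeal R L k I) := by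
  induction k with
  | zero => simp
  | succ k ih =>
    have hunit : IsUnit ((2 ^ k + 2 ^ k).choose (2 ^ k) : R) :=
      isUnit_natCast_of_ratAlgebra (Nat.choose_pos (Nat.le_add_right _ _)).ne'
    rw [derivedSeriesOfIdeal_succ, derivedSeriesOfIdeal_succ, pow_succ, mul_two]
    exact (LieSubmodule.mono_lie ih ih).trans (lie_leadingIdeal_le D I _ _ hunit)

theorem derivedSeriesOfIdeal_leadingIdeal_one_eq_bot (D : LieDerivation R L L)
    {I : LieIdeal R L} {k : ℕ} (hk : derivedSeriesOfIdeal R L k I = ⊥) :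
    derivedSeriesOfIdeal R L (k + k) (leadingIdeal D I 1 I) = ⊥ := by
  have hle : derivedSeriesOfIdeal R L k (leadingIdeal D I 1 I) ≤ I := by
    simpa only [hk, leadingIdeal_bot] using derivedSeriesOfIdeal_leadingIdeal_one_le D I k
  rw [derivedSeriesOfIdeal_add, eq_bot_iff, ← hk]
  exact derivedSeriesOfIdeal_mono hle k

theorem statement8_general (S : LieIdeal R L)
    (hS : S = sSup {I : LieIdeal R L | ∃ k : ℕ, derivedSeriesOfIdeal R L k I = ⊥})
    (D : LieDerivation R L L) :
    Submodule.map D.toLinearMap S.toSubmodule ≤ S.toSubmodule := by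
  rw [Submodule.map_le_iff_le_comap]
  conv_lhs => rw [hS, LieSubmodule.sSup_toSubmodule]
  refine sSup_le ?_
  rintro _ ⟨I, ⟨k, hk⟩, rfl⟩ x hx
  have hle : leadingIdeal D I 1 I ≤ S :=
    hS ▸ le_sSup ⟨k + k, derivedSeriesOfIdeal_leadingIdeal_one_eq_bot D hk⟩
  exact hle (iterate_mem_leadingIdeal (n := 1) hx ((differentialPower_one D I).symm ▸ hx))

end RatAlgebra

end DifferentialPower

/-- Let `L` be a Lie algebra over a field `F` of characteristic `0`, and
let `S(L)` denote the sum of all solvable ideals of `L`. Then `S(L)` is a characteristic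
ideal: `D(S(L)) ⊆ S(L)` for every derivation `D` of `L`. -/
theorem statement8 (F L : Type*) [Field F] [CharZero F] [LieRing L] [LieAlgebra F L]
    (S : LieIdeal F L)
    (hS : S = sSup {I : LieIdeal F L | ∃ k : ℕ, LieAlgebra.derivedSeriesOfIdeal F L k I = ⊥})
    (D : LieDerivation F L L) :
    Submodule.map D.toLinearMap S.toSubmodule ≤ S.toSubmodule :=
  statement8_general S hS D
end

section
/- Let L be a Lie algebra over a field F of characteristic 0, let I be an abelian ideal of L, and let D be a derivation of L. Then for every positive integer k, the ideal J_k = I + D(I) + ⋯ + Dᵏ(I) is solvable of derived length at most k + 1. -/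
/-!
Write `J_k = I + D(I) + ⋯ + Dᵏ(I)`. The Leibniz rule makes each `J_k` an ideal, so modulo `J_k`
the bracket of two elements of `J_{k+1}` depends only on their components in `D^{k+1}(I)`. Since
`⁅a, b⁆ = 0` for `a, b ∈ I`, expanding `D^{2(k+1)} ⁅a, b⁆ = 0` by the general Leibniz rule leaves,
modulo `J_k`, only the middle term, so `(2(k+1) choose k+1) • ⁅J_{k+1}, J_{k+1}⁆ ⊆ J_k`.
Descending from `J_k` to `J_0 = I` in this way, a product of such binomial coefficients kills the
`(k+1)`-st derived ideal of `J_k`. Each of them divides `(2k)!`, so when multiplication by `(2k)!`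
is injective on `L` this derived ideal is zero.
-/

open scoped Nat

theorem isSMulRegular_of_dvd {S M : Type*} [CommMonoid S] [MulAction S M] {a b : S}
    (hb : IsSMulRegular M b) (h : a ∣ b) : IsSMulRegular M a := by
  obtain ⟨c, rfl⟩ := h
  exact (IsSMulRegular.mul_iff.mp hb).1

theorem choose_dvd_factorial {n k : ℕ} (h : k ≤ n) : n.choose k ∣ n ! :=
  ⟨k ! * (n - k)!, by rw [← mul_assoc, Nat.choose_mul_factorial_mul_factorial h]⟩

section IterateSum

variable {R M : Type*} [Semiring R] [AddCommMonoid M] [Module R M]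

/-- The sum `N + f(N) + ⋯ + fᵏ(N)` of the images of a submodule under the first iterates of an
endomorphism. The upper index `k` is included. -/
def iterateSum (f : Module.End R M) (N : Submodule R M) (k : ℕ) : Submodule R M :=
  ⨆ j ∈ Finset.range (k + 1), N.map (f ^ j)

variable {f : Module.End R M} {N : Submodule R M} {j k : ℕ} {x : M}

theorem iterateSum_zero : iterateSum f N 0 = N := by
  simp [iterateSum, Module.End.one_eq_id]

theorem iterateSum_succ :
    iterateSum f N (k + 1) = iterateSum f N k ⊔ N.map (f ^ (k + 1)) := by
  rw [iterateSum, Finset.range_add_one, Finset.iSup_insert, sup_comm, iterateSum]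

theorem iterateSum_mono : Monotone (iterateSum f N) :=
  monotone_nat_of_le_succ fun _ => le_sup_left.trans_eq iterateSum_succ.symm

theorem iterate_mem_iterateSum (hj : j ≤ k) (hx : x ∈ N) : f^[j] x ∈ iterateSum f N k := by
  rw [← Module.End.pow_apply]
  exact Submodule.mem_iSup_of_mem j <| Submodule.mem_iSup_of_mem
    (Finset.mem_range_succ_iff.mpr hj) (Submodule.mem_map_of_mem hx)

theorem iterateSum_le {P : Submodule R M} (h : ∀ j ≤ k, ∀ x ∈ N, f^[j] x ∈ P) :
    iterateSum f N k ≤ P := by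
  refine iSup₂_le fun j hj => Submodule.map_le_iff_le_comap.mpr fun x hx => ?_
  rw [Submodule.mem_comap, Module.End.pow_apply]
  exact h j (Finset.mem_range_succ_iff.mp hj) x hx

theorem apply_mem_iterateSum_succ (hx : x ∈ iterateSum f N k) :
    f x ∈ iterateSum f N (k + 1) := by
  suffices iterateSum f N k ≤ (iterateSum f N (k + 1)).comap f from this hx
  refine iterateSum_le fun j hj y hy => ?_
  rw [Submodule.mem_comap, ← Function.iterate_succ_apply' f]
  exact iterate_mem_iterateSum (Nat.succ_le_succ hj) hy

theorem exists_add_iterate_eq_of_mem_iterateSum_succ (hx : x ∈ iterateSum f N (k + 1)) :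
    ∃ u ∈ iterateSum f N k, ∃ a ∈ N, u + f^[k + 1] a = x := by
  rw [iterateSum_succ] at hx
  obtain ⟨u, hu, _, ⟨a, ha, rfl⟩, rfl⟩ := Submodule.mem_sup.mp hx
  exact ⟨u, hu, a, ha, by rw [Module.End.pow_apply]⟩

end IterateSum

section LieIdeal

variable {R L : Type*} [CommRing R] [LieRing L] [LieAlgebra R L]

theorem lie_iterate_mem_iterateSum {I : LieIdeal R L} (D : LieDerivation R L L) {a : L}
    (ha : a ∈ I) (i : ℕ) (x : L) :
    ⁅x, D^[i] a⁆ ∈ iterateSum D.toLinearMap I.toSubmodule i := by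
  induction i generalizing x with
  | zero =>
    rw [iterateSum_zero]
    exact I.lie_mem ha
  | succ i ih =>
    have leibniz : ⁅x, D^[i + 1] a⁆ = D ⁅x, D^[i] a⁆ - ⁅D x, D^[i] a⁆ := by
      rw [Function.iterate_succ_apply', D.apply_lie_eq_add, add_sub_cancel_right]
    rw [leibniz]
    exact sub_mem (apply_mem_iterateSum_succ (ih x)) (iterateSum_mono i.le_succ (ih (D x)))

/-- The ideal `J_k = I + D(I) + ⋯ + Dᵏ(I)` of a Lie algebra, for an ideal `I` and a
derivation `D`. -/
def iterateIdeal (I : LieIdeal R L) (D : LieDerivation R L L) (k : ℕ) : LieIdeal R L where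
  __ := iterateSum D.toLinearMap I.toSubmodule k
  lie_mem {x _} hy :=
    iterateSum_le (P := (iterateSum D.toLinearMap I.toSubmodule k).comap (LieAlgebra.ad R L x))
      (fun j hj _ ha => iterateSum_mono hj (lie_iterate_mem_iterateSum D ha j x)) hy

variable {I : LieIdeal R L} {D : LieDerivation R L L} {k n : ℕ}

theorem iterateIdeal_zero : iterateIdeal I D 0 = I :=
  LieSubmodule.toSubmodule_injective iterateSum_zero

theorem iterate_mem_iterateIdeal {a : L} {j : ℕ} (hj : j ≤ k) (ha : a ∈ I) :
    D^[j] a ∈ iterateIdeal I D k :=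
  iterate_mem_iterateSum (f := D.toLinearMap) hj ha

theorem centralBinom_nsmul_lie_iterate_mem {a b : L} (ha : a ∈ I) (hb : b ∈ I)
    (hab : ⁅a, b⁆ = 0) :
    (k + 1).centralBinom • ⁅D^[k + 1] a, D^[k + 1] b⁆ ∈ iterateIdeal I D k := by
  have leibniz := D.iterate_apply_lie (2 * (k + 1)) a b
  have middle_mem : (k + 1, k + 1) ∈ Finset.HasAntidiagonal.antidiagonal (2 * (k + 1)) :=
    Finset.HasAntidiagonal.mem_antidiagonal.mpr (two_mul _).symm
  rw [hab, Function.iterate_fixed (map_zero D), ← Finset.add_sum_erase _ _ middle_mem] at leibniz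
  rw [Nat.centralBinom_eq_two_mul_choose, eq_neg_of_add_eq_zero_left leibniz.symm]
  refine neg_mem (sum_mem fun ⟨i, j⟩ hij => nsmul_mem ?_ _)
  have le_or_le : i ≤ k ∨ j ≤ k := by
    simp only [Finset.mem_erase, Finset.HasAntidiagonal.mem_antidiagonal, ne_eq,
      Prod.mk.injEq] at hij
    lia
  rcases le_or_le with hi | hj
  · exact lie_mem_left R L _ _ _ (iterate_mem_iterateIdeal hi ha)
  · exact lie_mem_right R L _ _ _ (iterate_mem_iterateIdeal hj hb)

theorem centralBinom_nsmul_lie_mem (hI : ⁅I, I⁆ = ⊥) {x y : L}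
    (hx : x ∈ iterateIdeal I D (k + 1)) (hy : y ∈ iterateIdeal I D (k + 1)) :
    (k + 1).centralBinom • ⁅x, y⁆ ∈ iterateIdeal I D k := by
  obtain ⟨u, hu, a, ha, rfl⟩ := exists_add_iterate_eq_of_mem_iterateSum_succ hx
  obtain ⟨v, hv, b, hb, rfl⟩ := exists_add_iterate_eq_of_mem_iterateSum_succ hy
  have hab : ⁅a, b⁆ = 0 := (LieSubmodule.lie_eq_bot_iff I I).mp hI a ha b hb
  rw [add_lie, lie_add (D.toLinearMap^[k + 1] a), nsmul_add, nsmul_add]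
  exact add_mem (nsmul_mem (lie_mem_left R L _ _ _ hu) _) <|
    add_mem (nsmul_mem (lie_mem_right R L _ _ _ hv) _)
      (centralBinom_nsmul_lie_iterate_mem ha hb hab)

theorem nsmul_mem_of_mem_lie {M : Type*} [AddCommGroup M] [Module R M] [LieRingModule L M]
    [LieModule R L M] {J : LieIdeal R L} {N : LieSubmodule R L M} {P : Submodule R M}
    (h : ∀ x ∈ J, ∀ m ∈ N, n • ⁅x, m⁆ ∈ P) {z : M} (hz : z ∈ ⁅J, N⁆) : n • z ∈ P := by
  suffices (⁅J, N⁆ : LieSubmodule R L M).toSubmodule ≤ P.comap (n • LinearMap.id) from this hz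
  rw [LieSubmodule.lieIdeal_oper_eq_linear_span', Submodule.span_le]
  rintro _ ⟨x, hx, m, hm, rfl⟩
  exact h x hx m hm

theorem lie_self_eq_bot_of_nsmul_mem (hI : ⁅I, I⁆ = ⊥) (hn : IsSMulRegular L n)
    {J : LieIdeal R L} (hJ : ∀ x ∈ J, n • x ∈ I) : ⁅J, J⁆ = ⊥ := by
  refine (LieSubmodule.lie_eq_bot_iff J J).mpr fun x hx y hy => ?_
  apply (hn.mul hn).right_eq_zero_of_smul
  rw [mul_smul, ← lie_nsmul, ← nsmul_lie]
  exact (LieSubmodule.lie_eq_bot_iff I I).mp hI _ (hJ x hx) _ (hJ y hy)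

theorem derivedSeriesOfIdeal_eq_bot_of_nsmul_mem (hI : ⁅I, I⁆ = ⊥)
    (hk : IsSMulRegular L (2 * k)!) (hn : IsSMulRegular L n) {J : LieIdeal R L}
    (hJ : ∀ x ∈ J, n • x ∈ iterateIdeal I D k) :
    LieAlgebra.derivedSeriesOfIdeal R L (k + 1) J = ⊥ := by
  induction k generalizing n J with
  | zero =>
    rw [iterateIdeal_zero] at hJ
    exact lie_self_eq_bot_of_nsmul_mem hI hn hJ
  | succ k ih =>
    have regular_factorial : IsSMulRegular L (2 * k)! :=
      isSMulRegular_of_dvd hk (Nat.factorial_dvd_factorial (by lia))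
    have regular_centralBinom : IsSMulRegular L (k + 1).centralBinom :=
      isSMulRegular_of_dvd hk (choose_dvd_factorial (by lia))
    have lie_mem : ∀ z ∈ ⁅J, J⁆, ((k + 1).centralBinom * (n * n)) • z ∈ iterateIdeal I D k := by
      refine fun z => nsmul_mem_of_mem_lie (P := (iterateIdeal I D k).toSubmodule) ?_
      intro x hx y hy
      rw [mul_smul, mul_smul, ← lie_nsmul, ← nsmul_lie]
      exact centralBinom_nsmul_lie_mem hI (hJ x hx) (hJ y hy)
    rw [LieAlgebra.derivedSeriesOfIdeal_add J (k + 1) 1]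
    exact ih regular_factorial (regular_centralBinom.mul (hn.mul hn)) lie_mem

end LieIdeal

theorem statement10_general {R L : Type*} [CommRing R] [LieRing L] [LieAlgebra R L]
    {I : LieIdeal R L} (habelian : ⁅I, I⁆ = ⊥) {D : LieDerivation R L L} {k : ℕ}
    (hreg : IsSMulRegular L (2 * k)!) {J : LieIdeal R L}
    (hJ : J.toSubmodule =
      ⨆ j ∈ Finset.range (k + 1), Submodule.map (D.toLinearMap ^ j) I.toSubmodule) :
    LieAlgebra.derivedSeriesOfIdeal R L (k + 1) J = ⊥ := by
  obtain rfl : J = iterateIdeal I D k := LieSubmodule.toSubmodule_injective hJ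
  exact derivedSeriesOfIdeal_eq_bot_of_nsmul_mem habelian hreg (.one L) fun x hx =>
    (one_nsmul x).symm ▸ hx

/-- Let `L` be a Lie algebra over a field `F` of characteristic `0`,
let `I` be an abelian ideal of `L`, and let `D` be a derivation of `L`. Then for every
positive integer `k`, the ideal `J_k = I + D(I) + ⋯ + Dᵏ(I)` is solvable of derived
length at most `k + 1`. -/
theorem statement10 (F L : Type*) [Field F] [CharZero F] [LieRing L] [LieAlgebra F L]
    (I : LieIdeal F L) (habelian : (⁅I, I⁆ : LieIdeal F L) = ⊥)
    (D : LieDerivation F L L) (k : ℕ) (hk : 0 < k)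
    (J : LieIdeal F L)
    (hJ : J.toSubmodule =
      ⨆ j ∈ Finset.range (k + 1), Submodule.map (D.toLinearMap ^ j) I.toSubmodule) :
    LieAlgebra.derivedSeriesOfIdeal F L (k + 1) J = ⊥ := by
  have : IsAddTorsionFree L := .of_isTorsionFree F L
  exact statement10_general habelian (.of_ne_zero (2 * k).factorial_ne_zero) hJ
end
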